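/- Suppose there exists F ∈ 𝒜_> that cannot be written as a union of finitely many μ-atoms. Then every compact subset K of M_F has empty interior. -/

import Mathlib

open MeasureTheory Topology Set Pointwise

/-- The set of all real-valued measurable functions on `X`, as a subtype. -/
abbrev Mble (X : Type*) [MeasurableSpace X] : Type _ := {f : X → ℝ // Measurable f}

/-- The basic set `B(f, A, ε)`: all `g` such that for some measurable null set `N`,
`sup_{x ∈ A \ N} |f x - g x| < ε`. -/
def FBall {X : Type*} [MeasurableSpace X] (μ : Measure X) (f : Mble X) (A : Set X)
    (ε : ℝ) : Set (Mble X) :=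
  {g | ∃ N : Set X, MeasurableSet N ∧ μ N = 0 ∧
        ∃ b : ℝ, b < ε ∧ ∀ x ∈ A \ N, |f.1 x - g.1 x| ≤ b}

/-- The `F_μ`-topology on `Mble X`, generated by the sets `B(f, A, ε)` with
`A` measurable of finite measure and `ε > 0`. -/
def FTop {X : Type*} [MeasurableSpace X] (μ : Measure X) : TopologicalSpace (Mble X) :=
  TopologicalSpace.generateFrom
    {S | ∃ (f : Mble X) (A : Set X) (ε : ℝ),
        MeasurableSet A ∧ μ A < ⊤ ∧ 0 < ε ∧ S = FBall μ f A ε}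

/-- A `μ`-atom: a measurable set of positive measure admitting no decomposition into two
disjoint measurable pieces of positive measure. -/
def MuAtom {X : Type*} [MeasurableSpace X] (μ : Measure X) (A : Set X) : Prop :=
  MeasurableSet A ∧ 0 < μ A ∧
    ¬ ∃ B C : Set X, MeasurableSet B ∧ MeasurableSet C ∧ Disjoint B C ∧
        B ∪ C = A ∧ 0 < μ B ∧ 0 < μ C

/-- `G` is a union of finitely many `μ`-atoms. -/
def FinAtomUnion {X : Type*} [MeasurableSpace X] (μ : Measure X) (G : Set X) : Prop :=
  ∃ (n : ℕ) (F : Fin n → Set X), (∀ i, MuAtom μ (F i)) ∧ G = ⋃ i, F i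

/-- `L^∞_G`: the measurable functions that are essentially bounded on `G`. -/
def Linf {X : Type*} [MeasurableSpace X] (μ : Measure X) (G : Set X) : Set (Mble X) :=
  {f | ∃ M₀ : ℝ, 0 < M₀ ∧ ∃ N : Set X, MeasurableSet N ∧ μ N = 0 ∧
        ∀ x ∈ G \ N, |f.1 x| ≤ M₀}

/-- The intersection `⋂_{G ∈ 𝒜_>} L^∞_G`. -/
def InterLinf {X : Type*} [MeasurableSpace X] (μ : Measure X) : Set (Mble X) :=
  ⋂ G ∈ {A : Set X | MeasurableSet A ∧ 0 < μ A ∧ μ A < ⊤}, Linf μ G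

/-- The zero function as an element of `Mble X`. -/
def zeroM {X : Type*} [MeasurableSpace X] : Mble X := ⟨fun _ => 0, measurable_const⟩

/-- `μ` is hemifinite: some sequence in `𝒜_>` almost contains every member of `𝒜_>`. -/
def Hemifinite {X : Type*} [MeasurableSpace X] (μ : Measure X) : Prop :=
  ∃ A : ℕ → Set X, (∀ n, MeasurableSet (A n) ∧ 0 < μ (A n) ∧ μ (A n) < ⊤) ∧
    ∀ F : Set X, MeasurableSet F → 0 < μ F → μ F < ⊤ → ∃ n, μ (F \ A n) = 0

/-- `G⁺`: functions strictly positive μ-almost everywhere on `G`. -/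
def Gplus {X : Type*} [MeasurableSpace X] (μ : Measure X) (G : Set X) : Set (Mble X) :=
  {f | ∃ N : Set X, MeasurableSet N ∧ μ N = 0 ∧ ∀ x ∈ G \ N, 0 < f.1 x}

/-- `G⁰`: functions nonnegative μ-almost everywhere on `G`. -/
def Gzero {X : Type*} [MeasurableSpace X] (μ : Measure X) (G : Set X) : Set (Mble X) :=
  {f | ∃ N : Set X, MeasurableSet N ∧ μ N = 0 ∧ ∀ x ∈ G \ N, 0 ≤ f.1 x}

instance {X : Type*} [MeasurableSpace X] : Add (Mble X) :=
  ⟨fun f g => ⟨f.1 + g.1, f.2.add g.2⟩⟩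

/-!
If `F` is not a finite union of atoms, it splits into two pieces of positive measure, at least one
of which is again not a finite union of atoms. Iterating gives a decreasing sequence `E n` of
subsets of `F` whose successive differences have positive measure. For every `f` and `c > 0` the
functions `f + c 1_{E n}` are then pairwise at essential distance `c` on `F`, whereas they are all
uniformly close to `f` when `c` is small. So each neighbourhood of `f` contains an infinite
uniformly separated family, which no compact set does.
-/

section

variable {X : Type*} [MeasurableSpace X] {μ : Measure X}

section FBall

variable {f g h : Mble X} {A B : Set X} {ε δ : ℝ}

theorem mem_FBall_iff :
    g ∈ FBall μ f A ε ↔ ∃ b < ε, ∀ᵐ x ∂μ, x ∈ A → |f.1 x - g.1 x| ≤ b := by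
  constructor
  · rintro ⟨N, -, hN, b, hb, hfg⟩
    refine ⟨b, hb, ?_⟩
    filter_upwards [measure_eq_zero_iff_ae_notMem.1 hN] with x hxN hxA
    exact hfg x ⟨hxA, hxN⟩
  · rintro ⟨b, hb, hfg⟩
    obtain ⟨N, hsub, hNm, hN⟩ := exists_measurable_superset_of_null (ae_iff.1 hfg)
    exact ⟨N, hNm, hN, b, hb, fun x hx => by_contra fun hfgx =>
      hx.2 (hsub fun hx' => hfgx (hx' hx.1))⟩

namespace FBall

theorem mem_self (hε : 0 < ε) : f ∈ FBall μ f A ε :=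
  mem_FBall_iff.2 ⟨0, hε, by simp⟩

theorem mono (hAB : A ⊆ B) (hδε : δ ≤ ε) : FBall μ f B δ ⊆ FBall μ f A ε := by
  intro g hg
  obtain ⟨b, hb, hfg⟩ := mem_FBall_iff.1 hg
  exact mem_FBall_iff.2 ⟨b, hb.trans_le hδε, hfg.mono fun x hx hxA => hx (hAB hxA)⟩

theorem symm (hg : g ∈ FBall μ f A ε) : f ∈ FBall μ g A ε := by
  simpa only [mem_FBall_iff, abs_sub_comm] using hg

theorem trans (hg : g ∈ FBall μ f A ε) (hh : h ∈ FBall μ g A δ) : h ∈ FBall μ f A (ε + δ) := by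
  obtain ⟨b, hb, hfg⟩ := mem_FBall_iff.1 hg
  obtain ⟨c, hc, hgh⟩ := mem_FBall_iff.1 hh
  refine mem_FBall_iff.2 ⟨b + c, add_lt_add hb hc, ?_⟩
  filter_upwards [hfg, hgh] with x hfgx hghx hxA
  exact (abs_sub_le _ (g.1 x) _).trans (add_le_add (hfgx hxA) (hghx hxA))

theorem exists_lt (hg : g ∈ FBall μ f A ε) : ∃ δ < ε, g ∈ FBall μ f A δ := by
  obtain ⟨b, hb, hfg⟩ := mem_FBall_iff.1 hg
  obtain ⟨δ, hbδ, hδε⟩ := exists_between hb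
  exact ⟨δ, hδε, mem_FBall_iff.2 ⟨b, hbδ, hfg⟩⟩

theorem exists_subset (hg : g ∈ FBall μ f A ε) : ∃ δ > 0, FBall μ g A δ ⊆ FBall μ f A ε := by
  obtain ⟨η, hη, hgη⟩ := exists_lt hg
  refine ⟨ε - η, sub_pos.2 hη, fun h hh => ?_⟩
  simpa only [add_sub_cancel] using trans hgη hh

theorem isOpen (hA : MeasurableSet A) (hμA : μ A < ⊤) (hε : 0 < ε) :
    IsOpen[FTop μ] (FBall μ f A ε) :=
  TopologicalSpace.isOpen_generateFrom_of_mem ⟨f, A, ε, hA, hμA, hε, rfl⟩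

end FBall

theorem exists_FBall_subset_of_isOpen {U : Set (Mble X)} (hU : IsOpen[FTop μ] U) (hf : f ∈ U) :
    ∃ (A : Set X) (ε : ℝ), MeasurableSet A ∧ μ A < ⊤ ∧ 0 < ε ∧ FBall μ f A ε ⊆ U := by
  change TopologicalSpace.GenerateOpen _ U at hU
  induction hU with
  | basic U hU =>
    obtain ⟨g, A, ε, hA, hμA, -, rfl⟩ := hU
    obtain ⟨δ, hδ, hsub⟩ := FBall.exists_subset hf
    exact ⟨A, δ, hA, hμA, hδ, hsub⟩
  | univ => exact ⟨∅, 1, .empty, by simp, one_pos, subset_univ _⟩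
  | inter U V _ _ ihU ihV =>
    obtain ⟨A, ε, hA, hμA, hε, hU⟩ := ihU hf.1
    obtain ⟨B, δ, hB, hμB, hδ, hV⟩ := ihV hf.2
    exact ⟨A ∪ B, min ε δ, hA.union hB, measure_union_lt_top hμA hμB, lt_min hε hδ,
      subset_inter ((FBall.mono subset_union_left (min_le_left _ _)).trans hU)
        ((FBall.mono subset_union_right (min_le_right _ _)).trans hV)⟩
  | sUnion 𝒰 _ ih =>
    obtain ⟨U, hU, hfU⟩ := hf
    obtain ⟨A, ε, hA, hμA, hε, hsub⟩ := ih U hU hfU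
    exact ⟨A, ε, hA, hμA, hε, hsub.trans (subset_sUnion_of_mem hU)⟩

theorem exists_finset_subset_iUnion_FBall_of_isCompact {K : Set (Mble X)}
    (hK : @IsCompact _ (FTop μ) K) (hA : MeasurableSet A) (hμA : μ A < ⊤) (hε : 0 < ε) :
    ∃ t : Finset (Mble X), K ⊆ ⋃ g ∈ t, FBall μ g A ε :=
  letI := FTop μ
  hK.elim_finite_subcover (fun g => FBall μ g A ε) (fun _ => FBall.isOpen hA hμA hε)
    fun g _ => mem_iUnion.2 ⟨g, FBall.mem_self hε⟩

theorem exists_lt_mem_FBall_of_isCompact {ι : Type*} [LinearOrder ι] [Infinite ι]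
    {K : Set (Mble X)} (hK : @IsCompact _ (FTop μ) K) {u : ι → Mble X} (hu : ∀ i, u i ∈ K)
    (hA : MeasurableSet A) (hμA : μ A < ⊤) (hε : 0 < ε) :
    ∃ i j, i < j ∧ u j ∈ FBall μ (u i) A ε := by
  obtain ⟨t, ht⟩ := exists_finset_subset_iUnion_FBall_of_isCompact hK hA hμA (half_pos hε)
  have hcenter : ∀ i, ∃ g : t, u i ∈ FBall μ g A (ε / 2) := fun i => by
    simpa using ht (hu i)
  choose g hg using hcenter
  obtain ⟨i, j, hij, hgij⟩ := Finite.exists_ne_map_eq_of_infinite g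
  have hclose : ∀ k l, g k = g l → u l ∈ FBall μ (u k) A ε := fun k l hkl => by
    have hgk : u l ∈ FBall μ (g k) A (ε / 2) := hkl ▸ hg l
    simpa only [add_halves] using FBall.trans (FBall.symm (hg k)) hgk
  exact hij.lt_or_gt.elim (fun hlt => ⟨i, j, hlt, hclose i j hgij⟩)
    fun hgt => ⟨j, i, hgt, hclose j i hgij.symm⟩

end FBall

section Indicator

variable {f : Mble X} {A B F : Set X} {c ε : ℝ}

/-- The function `c 1_A`, as an element of `Mble X`; used to perturb a function on a single set. -/
noncomputable def indicatorM (hA : MeasurableSet A) (c : ℝ) : Mble X :=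
  ⟨A.indicator fun _ => c, measurable_const.indicator hA⟩

theorem add_indicatorM_mem_FBall (hA : MeasurableSet A) (hc : |c| < ε) :
    f + indicatorM hA c ∈ FBall μ f F ε := by
  refine mem_FBall_iff.2 ⟨|c|, hc, .of_forall fun x _ => ?_⟩
  calc |f.1 x - (f.1 x + A.indicator (fun _ => c) x)|
      = ‖A.indicator (fun _ => c) x‖ := by rw [sub_add_cancel_left, abs_neg, Real.norm_eq_abs]
    _ ≤ |c| := norm_indicator_le_norm_self (fun _ => c) x

theorem add_indicatorM_notMem_FBall (hA : MeasurableSet A) (hB : MeasurableSet B) (hAF : A ⊆ F)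
    (hAB : 0 < μ (A \ B)) :
    f + indicatorM hB c ∉ FBall μ (f + indicatorM hA c) F |c| := by
  intro hmem
  obtain ⟨b, hb, hdist⟩ := mem_FBall_iff.1 hmem
  obtain ⟨x, ⟨hxA, hxB⟩, hx⟩ :=
    (frequently_ae_mem_iff.2 hAB.ne').and_eventually hdist |>.exists
  have hcb : |f.1 x + A.indicator (fun _ => c) x - (f.1 x + B.indicator (fun _ => c) x)| ≤ b :=
    hx (hAF hxA)
  rw [indicator_of_mem hxA, indicator_of_notMem hxB, add_sub_add_left_eq_sub, sub_zero] at hcb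
  exact hcb.not_gt hb

end Indicator

section Atoms

variable {A B F : Set X}

theorem MuAtom.finAtomUnion (hA : MuAtom μ A) : FinAtomUnion μ A :=
  ⟨1, fun _ => A, fun _ => hA, (iUnion_const A).symm⟩

theorem FinAtomUnion.union (hA : FinAtomUnion μ A) (hB : FinAtomUnion μ B) :
    FinAtomUnion μ (A ∪ B) := by
  obtain ⟨m, S, hS, rfl⟩ := hA
  obtain ⟨n, T, hT, rfl⟩ := hB
  refine ⟨m + n, Fin.append S T, ?_, ?_⟩
  · simpa only [Fin.forall_fin_add, Fin.append_left, Fin.append_right] using ⟨hS, hT⟩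
  · calc (⋃ i, S i) ∪ ⋃ j, T j
        = ⋃ k : Fin m ⊕ Fin n, Fin.append S T (finSumFinEquiv k) := by
          simp only [iUnion_sum, finSumFinEquiv_apply_left, finSumFinEquiv_apply_right,
            Fin.append_left, Fin.append_right]
      _ = ⋃ k, Fin.append S T k := finSumFinEquiv.surjective.iUnion_comp _

theorem exists_subset_not_finAtomUnion (hF : MeasurableSet F) (hμF : 0 < μ F)
    (hFn : ¬ FinAtomUnion μ F) :
    ∃ B ⊆ F, MeasurableSet B ∧ 0 < μ B ∧ ¬ FinAtomUnion μ B ∧ 0 < μ (F \ B) := by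
  have hsplit : ∃ B C : Set X, MeasurableSet B ∧ MeasurableSet C ∧ Disjoint B C ∧
      B ∪ C = F ∧ 0 < μ B ∧ 0 < μ C :=
    by_contra fun hns => hFn (MuAtom.finAtomUnion ⟨hF, hμF, hns⟩)
  obtain ⟨B, C, hB, hC, hBC, rfl, hμB, hμC⟩ := hsplit
  by_cases hBn : FinAtomUnion μ B
  · refine ⟨C, subset_union_right, hC, hμC, fun hCn => hFn (hBn.union hCn), ?_⟩
    rwa [union_sdiff_cancel_right hBC.le_bot]
  · refine ⟨B, subset_union_left, hB, hμB, hBn, ?_⟩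
    rwa [union_sdiff_cancel_left hBC.le_bot]

theorem exists_seq_measure_diff_pos_of_not_finAtomUnion (hF : MeasurableSet F) (hμF : 0 < μ F)
    (hFn : ¬ FinAtomUnion μ F) :
    ∃ E : ℕ → Set X, (∀ n, MeasurableSet (E n)) ∧ (∀ n, E n ⊆ F) ∧
      ∀ m n, m < n → 0 < μ (E m \ E n) := by
  let S := {A : Set X // MeasurableSet A ∧ 0 < μ A ∧ ¬ FinAtomUnion μ A}
  have hstep : ∀ A : S, ∃ B : S, B.1 ⊆ A.1 ∧ 0 < μ (A.1 \ B.1) := fun ⟨A, hA, hμA, hAn⟩ =>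
    let ⟨B, hBA, hB, hμB, hBn, hdiff⟩ := exists_subset_not_finAtomUnion hA hμA hAn
    ⟨⟨B, hB, hμB, hBn⟩, hBA, hdiff⟩
  choose next hnext_subset hnext_diff using hstep
  let E : ℕ → S := fun n => next^[n] ⟨F, hF, hμF, hFn⟩
  have hE_succ : ∀ n, E (n + 1) = next (E n) := fun n => Function.iterate_succ_apply' next n _
  have hE_anti : Antitone fun n => (E n).1 :=
    antitone_nat_of_succ_le fun n => hE_succ n ▸ hnext_subset (E n)
  refine ⟨fun n => (E n).1, fun n => (E n).2.1, fun n => hE_anti n.zero_le, fun m n hmn => ?_⟩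
  calc 0 < μ ((E m).1 \ (E (m + 1)).1) := hE_succ m ▸ hnext_diff (E m)
    _ ≤ μ ((E m).1 \ (E n).1) := measure_mono (sdiff_subset_sdiff_right (hE_anti hmn))

end Atoms

theorem stmt14_general (hF : ∃ F : Set X, MeasurableSet F ∧ 0 < μ F ∧ μ F < ⊤ ∧ ¬ FinAtomUnion μ F)
    {K : Set (Mble X)} (hK : @IsCompact (Mble X) (FTop μ) K) :
    @interior (Mble X) (FTop μ) K = ∅ := by
  let := FTop μ
  obtain ⟨F, hFm, hF0, hFt, hFn⟩ := hF
  obtain ⟨E, hE, hEF, hEdiff⟩ := exists_seq_measure_diff_pos_of_not_finAtomUnion hFm hF0 hFn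
  refine eq_empty_iff_forall_notMem.2 fun f hf => ?_
  obtain ⟨A, ε, -, -, hε, hball⟩ := exists_FBall_subset_of_isOpen isOpen_interior hf
  obtain ⟨c, hc, hcε⟩ := exists_between hε
  have hmem : ∀ n, f + indicatorM (hE n) c ∈ K := fun n =>
    interior_subset (hball (add_indicatorM_mem_FBall (hE n) (by rwa [abs_of_pos hc])))
  obtain ⟨i, j, hij, hclose⟩ :=
    exists_lt_mem_FBall_of_isCompact hK hmem hFm hFt (abs_pos.2 hc.ne')
  exact add_indicatorM_notMem_FBall (hE i) (hE j) (hEF i) (hEdiff i j hij) hclose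

end

/-- if some `F ∈ 𝒜_>` is not a finite union of `μ`-atoms, then every
compact subset of `M_F` has empty interior. -/
theorem stmt14 {X : Type*} [MeasurableSpace X] (μ : Measure X)
    (hpos : 0 < μ Set.univ)
    (hsub : ∀ A : Set X, MeasurableSet A → μ A = ⊤ →
      ∃ B, B ⊆ A ∧ MeasurableSet B ∧ 0 < μ B ∧ μ B < ⊤)
    (hF : ∃ F : Set X, MeasurableSet F ∧ 0 < μ F ∧ μ F < ⊤ ∧ ¬ FinAtomUnion μ F) :
    ∀ K : Set (Mble X), @IsCompact (Mble X) (FTop μ) K →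
      @interior (Mble X) (FTop μ) K = ∅ :=
  fun _ => stmt14_general hF
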